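/- Under simple random sampling without replacement of s (size n) from U (size N), followed by simple random sampling without replacement of s₁ (size n₁) from s, the conditional inclusion probability π_{2i} = Pr(i ∈ s₂ | s₁) equals n₂/(N − n₁) for every i ∈ U \ s₁, where n₂ = n − n₁ and s₂ = s \ s₁. -/

import Mathlib

open Finset

/-- The `n`-element finsets containing a given finset `t` with `#t ≤ n` are counted by
a binomial coefficient. -/
theorem card_filter_superset_powersetCard {ι : Type*} [Fintype ι] [DecidableEq ι] {n : ℕ}
    {t : Finset ι} (ht : t.card ≤ n) :
    (((univ : Finset ι).powersetCard n).filter (fun s => t ⊆ s)).card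
      = (Fintype.card ι - t.card).choose (n - t.card) := by
  rw [← card_compl, ← card_powersetCard]
  refine card_nbij' (fun s => s \ t) (fun s => s ∪ t) ?_ ?_ ?_ ?_
  · intro s hs
    simp only [coe_filter, mem_powersetCard_univ, Set.mem_ofPred_eq] at hs
    simp only [mem_coe, mem_powersetCard]
    refine ⟨fun x hx => by simp_all, ?_⟩
    rw [card_sdiff_of_subset hs.2, hs.1]
  · intro s hs
    simp only [mem_coe, mem_powersetCard] at hs
    simp only [coe_filter, mem_powersetCard_univ, Set.mem_ofPred_eq]
    refine ⟨?_, subset_union_right⟩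
    rw [card_union_of_disjoint (subset_compl_iff_disjoint_right.mp hs.1), hs.2]
    omega
  · intro s hs
    simp only [coe_filter, Set.mem_ofPred_eq] at hs
    exact sdiff_union_of_subset hs.2
  · intro s hs
    simp only [mem_coe, mem_powersetCard] at hs
    exact union_sdiff_cancel_right (subset_compl_iff_disjoint_right.mp hs.1)

/-- Under SRS without replacement of `s` (size `n`) from `U` (size `N`) followed by
SRS without replacement of `s₁` (size `n₁`) from `s`, the conditional inclusion
probability `π_{2i} = Pr(i ∈ s₂ | s₁)` equals `n₂/(N - n₁)` for every `i ∉ s₁`. -/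
theorem stmt_8 {ι : Type*} [Fintype ι] [DecidableEq ι] (N n n₁ : ℕ)
    (hN : Fintype.card ι = N) (h1 : n₁ < n) (h2 : n < N)
    (t : Finset ι) (ht : t.card = n₁) (i : ι) (hi : i ∉ t) :
    (∑ s ∈ (univ.powersetCard n).filter (fun s => t ⊆ s ∧ i ∈ s),
        ((N.choose n : ℝ))⁻¹ * ((n.choose n₁ : ℝ))⁻¹)
      / (∑ s ∈ (univ.powersetCard n).filter (fun s => t ⊆ s),
        ((N.choose n : ℝ))⁻¹ * ((n.choose n₁ : ℝ))⁻¹)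
      = ((n : ℝ) - n₁) / ((N : ℝ) - n₁) := by
  have hins : ((univ : Finset ι).powersetCard n).filter (fun s => t ⊆ s ∧ i ∈ s)
      = (univ.powersetCard n).filter (fun s => insert i t ⊆ s) := by
    ext s
    simp [insert_subset_iff, and_comm]
  have hcard : (insert i t).card = n₁ + 1 := by rw [card_insert_of_notMem hi, ht]
  rw [hins, sum_const, sum_const, nsmul_eq_mul, nsmul_eq_mul,
    card_filter_superset_powersetCard (by omega), card_filter_superset_powersetCard (by omega),
    hcard, ht, hN]
  obtain ⟨b, rfl⟩ : ∃ b, n = n₁ + 1 + b := ⟨n - (n₁ + 1), by omega⟩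
  obtain ⟨a, rfl⟩ : ∃ a, N = n₁ + 1 + a := ⟨N - (n₁ + 1), by omega⟩
  have hNn : (((n₁ + 1 + a).choose (n₁ + 1 + b) : ℕ) : ℝ) ≠ 0 := by
    exact_mod_cast (Nat.choose_pos h2.le).ne'
  have hnn : (((n₁ + 1 + b).choose n₁ : ℕ) : ℝ) ≠ 0 := by
    exact_mod_cast (Nat.choose_pos h1.le).ne'
  have hab : (((a + 1).choose (b + 1) : ℕ) : ℝ) ≠ 0 := by
    exact_mod_cast (Nat.choose_pos (by omega)).ne'
  have key : ((a : ℝ) + 1) * (a.choose b : ℝ) = ((a + 1).choose (b + 1) : ℝ) * ((b : ℝ) + 1) := by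
    exact_mod_cast Nat.add_one_mul_choose_eq a b
  rw [mul_div_mul_right _ _ (mul_ne_zero (inv_ne_zero hNn) (inv_ne_zero hnn)),
    show n₁ + 1 + a - (n₁ + 1) = a by omega, show n₁ + 1 + b - (n₁ + 1) = b by omega,
    show n₁ + 1 + a - n₁ = a + 1 by omega, show n₁ + 1 + b - n₁ = b + 1 by omega]
  push_cast
  rw [show (n₁ : ℝ) + 1 + b - n₁ = b + 1 by ring, show (n₁ : ℝ) + 1 + a - n₁ = a + 1 by ring,
    div_eq_div_iff hab (by positivity)]
  linarith
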